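/- arXiv:2308.16782 — 3 statements merged into one kernel-verified Lean document; each statement's English description precedes it below -/
import Mathlib

section
/- For each n ∈ ℕ, the coefficient sequence of N_n is log-concave: with N_{n,k} := k(n-k) C(2n+2, 2k+1)/(4n+2), one has N_{n,k}² ≥ N_{n,k-1} · N_{n,k+1} for all 2 ≤ k ≤ n-2. -/
/-!
The coefficient is a positive constant times the product of `k`, `n - k` and
`C(2n+2, 2k+1)`, each of which is log-concave in `k`. For the two linear factors this is
`(x - 1)(x + 1) ≤ x²`; for the binomial factor it is `choose_mul_choose_add_four_le`, which
compares consecutive ratios along every second entry of a row of Pascal's triangle.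
-/

/-- The coefficients `N_{n,k} = k(n-k) C(2n+2, 2k+1)/(4n+2)` of the type A
minuscule polynomial `N_n`. -/
noncomputable def minusculeCoeff (n k : ℕ) : ℝ :=
  ((k * (n - k) * Nat.choose (2 * n + 2) (2 * k + 1) : ℕ) : ℝ) / (4 * (n : ℝ) + 2)

theorem choose_add_two_mul (j d : ℕ) :
    (j + 2 + d).choose (j + 2) * ((j + 1) * (j + 2)) =
      (j + 2 + d).choose j * ((d + 2) * (d + 1)) := by
  have h1 := Nat.choose_succ_right_eq (j + 2 + d) j
  have h2 := Nat.choose_succ_right_eq (j + 2 + d) (j + 1)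
  rw [show j + 2 + d - j = d + 2 by omega] at h1
  rw [show j + 2 + d - (j + 1) = d + 1 by omega] at h2
  linear_combination (j + 1) * h2 + (d + 1) * h1

/-- Every second entry of a row of Pascal's triangle forms a log-concave sequence. With
`m = j + 4 + d`, the ratio of the two sides is
`(j+1)(j+2)(d+1)(d+2) / ((j+3)(j+4)(d+3)(d+4)) ≤ 1`. -/
theorem choose_mul_choose_add_four_le (m j : ℕ) :
    m.choose j * m.choose (j + 4) ≤ m.choose (j + 2) ^ 2 := by
  rcases lt_or_ge m (j + 4) with h | h
  · simp [Nat.choose_eq_zero_of_lt h]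
  obtain ⟨d, rfl⟩ := Nat.exists_eq_add_of_le h
  have h1 := choose_add_two_mul j (d + 2)
  have h2 := choose_add_two_mul (j + 2) d
  rw [show j + 2 + (d + 2) = j + 4 + d by ring] at h1
  rw [show j + 2 + 2 = j + 4 by ring] at h2
  generalize (j + 4 + d).choose j = x at *
  generalize (j + 4 + d).choose (j + 2) = y at *
  generalize (j + 4 + d).choose (j + 4) = z at *
  have hpos : 0 < ((d + 4) * (d + 3)) * ((j + 3) * (j + 4)) := by positivity
  refine Nat.le_of_mul_le_mul_right ?_ hpos
  calc x * z * (((d + 4) * (d + 3)) * ((j + 3) * (j + 4)))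
      = (x * ((d + 2 + 2) * (d + 2 + 1))) * (z * ((j + 2 + 1) * (j + 2 + 2))) := by ring
    _ = (y * ((j + 1) * (j + 2))) * (y * ((d + 2) * (d + 1))) := by rw [h1, h2]
    _ = y ^ 2 * (((d + 2) * (d + 1)) * ((j + 1) * (j + 2))) := by ring
    _ ≤ y ^ 2 * (((d + 4) * (d + 3)) * ((j + 3) * (j + 4))) := by gcongr <;> omega

/-- The coefficient sequence of `N_n` is log-concave:
`N_{n,k}² ≥ N_{n,k-1}·N_{n,k+1}` for `2 ≤ k ≤ n-2`. -/
theorem minusculeN_coeff_log_concave (n k : ℕ) (hk : 2 ≤ k) (hk' : k ≤ n - 2) :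
    minusculeCoeff n k ^ 2 ≥ minusculeCoeff n (k - 1) * minusculeCoeff n (k + 1) := by
  -- Substituting `k = a + 1` and `n - k = b + 1` removes the truncated subtractions.
  obtain ⟨a, rfl⟩ : ∃ a, k = a + 1 := ⟨k - 1, by omega⟩
  obtain ⟨b, rfl⟩ : ∃ b, n = a + b + 2 := ⟨n - a - 2, by omega⟩
  unfold minusculeCoeff
  rw [div_pow, div_mul_div_comm, ← sq, ge_iff_le]
  gcongr
  have hc := choose_mul_choose_add_four_le (2 * (a + b + 2) + 2) (2 * a + 1)
  rw [show a + 1 - 1 = a by omega, show a + b + 2 - a = b + 2 by omega,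
    show a + b + 2 - (a + 1) = b + 1 by omega, show a + b + 2 - (a + 1 + 1) = b by omega,
    show 2 * (a + 1) + 1 = 2 * a + 1 + 2 by ring,
    show 2 * (a + 1 + 1) + 1 = 2 * a + 1 + 4 by ring]
  norm_cast
  generalize (2 * (a + b + 2) + 2).choose (2 * a + 1) = x at *
  generalize (2 * (a + b + 2) + 2).choose (2 * a + 1 + 2) = y at *
  generalize (2 * (a + b + 2) + 2).choose (2 * a + 1 + 4) = z at *
  calc a * (b + 2) * x * ((a + 1 + 1) * b * z)
      = (a * (a + 2)) * (b * (b + 2)) * (x * z) := by ring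
    _ ≤ (a + 1) ^ 2 * (b + 1) ^ 2 * y ^ 2 := by
        gcongr
        · nlinarith
        · nlinarith
    _ = ((a + 1) * (b + 1) * y) ^ 2 := by ring
end

section
/- For all positive integers n, N_n(1) = (n-1)·2^{2n-3}; equivalently, ∑_{k=1}^{n-1} k(n-k) C(2n+2, 2k+1) = (4n+2)(n-1)2^{2n-3}. -/
/-!
For `k + l = n` one has `4kl + (2n+1) = (2k+1)(2l+1)`, and the factors `2k+1`, `2l+1` are absorbed
by the binomial coefficient: `(2k+1)(2l+1) C(2n+2, 2k+1) = (2n+2)(2n+1) C(2n, 2k)`. Summing over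
`0 ≤ k ≤ n` reduces everything to the sum of the odd-indexed binomials of row `2n+2`, which is
`2^(2n+1)`, and that of the even-indexed binomials of row `2n`, which is `2^(2n-1)`. Both follow
from Pascal's rule, which turns them into the full sum of the preceding row.
-/

/-- The type A minuscule polynomial
`N_n(x) = (1/(4n+2)) ∑_{k=1}^{n-1} k(n-k) C(2n+2, 2k+1) x^k`. -/
noncomputable def minusculeN (n : ℕ) : Polynomial ℝ :=
  ∑ k ∈ Finset.Icc 1 (n - 1),
    Polynomial.C (((k * (n - k) * Nat.choose (2 * n + 2) (2 * k + 1) : ℕ) : ℝ) /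
      (4 * (n : ℝ) + 2)) * Polynomial.X ^ k

lemma sum_pairs (f : ℕ → ℕ) (m : ℕ) :
    ∑ k ∈ Finset.range m, (f (2 * k) + f (2 * k + 1)) = ∑ j ∈ Finset.range (2 * m), f j := by
  induction m with
  | zero => simp
  | succ m ih =>
    rw [Finset.sum_range_succ, ih, Nat.mul_succ, Finset.sum_range_succ, Finset.sum_range_succ,
      add_assoc]

lemma sum_choose_odd (n : ℕ) :
    ∑ k ∈ Finset.range (n + 1), Nat.choose (2 * n + 2) (2 * k + 1) = 2 ^ (2 * n + 1) := by
  simp only [Nat.choose_succ_succ' (2 * n + 1)]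
  rw [sum_pairs (fun j => Nat.choose (2 * n + 1) j), ← Nat.sum_range_choose]
  rfl

lemma sum_choose_even (p : ℕ) :
    ∑ k ∈ Finset.range (p + 2), Nat.choose (2 * p + 2) (2 * k) = 2 ^ (2 * p + 1) := by
  have h := sum_pairs (fun j => Nat.choose (2 * p + 1) (j + 1)) (p + 1)
  have h1 := Finset.sum_range_succ' (fun j => Nat.choose (2 * p + 1) j) (2 * (p + 1))
  have h2 := Finset.sum_range_succ (fun j => Nat.choose (2 * p + 1) j) (2 * (p + 1))
  have h3 : ∑ j ∈ Finset.range (2 * p + 2), Nat.choose (2 * p + 1) j = 2 ^ (2 * p + 1) :=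
    Nat.sum_range_choose (2 * p + 1)
  have h4 : Nat.choose (2 * p + 1) (2 * (p + 1)) = 0 := Nat.choose_eq_zero_of_lt (by omega)
  rw [Finset.sum_range_succ']
  simp only [Nat.mul_succ, Nat.choose_succ_succ' (2 * p + 1)] at *
  simp only [Nat.mul_zero, Nat.choose_zero_right] at *
  omega

lemma choose_absorb (k l : ℕ) :
    4 * (k * l * Nat.choose (2 * (k + l) + 2) (2 * k + 1)) +
      (2 * (k + l) + 1) * Nat.choose (2 * (k + l) + 2) (2 * k + 1) =
    (2 * (k + l) + 2) * (2 * (k + l) + 1) * Nat.choose (2 * (k + l)) (2 * k) := by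
  have h1 := Nat.add_one_mul_choose_eq (2 * (k + l) + 1) (2 * k)
  have h2 := Nat.choose_mul_succ_eq (2 * (k + l)) (2 * k)
  rw [show 2 * (k + l) + 1 - 2 * k = 2 * l + 1 by omega] at h2
  zify at *
  linear_combination (-(2 * l + 1) : ℤ) * h1 - (2 * (k + l) + 2 : ℤ) * h2

lemma minuscule_sum (n : ℕ) (hn : 0 < n) :
    ∑ k ∈ Finset.Icc 1 (n - 1), k * (n - k) * Nat.choose (2 * n + 2) (2 * k + 1) =
      (4 * n + 2) * (n - 1) * 2 ^ (2 * n - 3) := by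
  -- The terms `k = 0` and `k = n` vanish.
  have hext : ∑ k ∈ Finset.Icc 1 (n - 1), k * (n - k) * Nat.choose (2 * n + 2) (2 * k + 1) =
      ∑ k ∈ Finset.range (n + 1), k * (n - k) * Nat.choose (2 * n + 2) (2 * k + 1) := by
    apply Finset.sum_subset
    · intro k hk
      simp only [Finset.mem_Icc, Finset.mem_range] at *
      omega
    · intro k hk hk'
      simp only [Finset.mem_Icc, Finset.mem_range] at *
      have : k = 0 ∨ n - k = 0 := by omega
      rcases this with h | h <;> simp [h]
  have key : 4 * ∑ k ∈ Finset.range (n + 1), k * (n - k) * Nat.choose (2 * n + 2) (2 * k + 1) +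
      (2 * n + 1) * ∑ k ∈ Finset.range (n + 1), Nat.choose (2 * n + 2) (2 * k + 1) =
      (2 * n + 2) * (2 * n + 1) * ∑ k ∈ Finset.range (n + 1), Nat.choose (2 * n) (2 * k) := by
    rw [Finset.mul_sum, Finset.mul_sum, Finset.mul_sum, ← Finset.sum_add_distrib]
    refine Finset.sum_congr rfl fun k hk => ?_
    have h := choose_absorb k (n - k)
    rwa [show k + (n - k) = n by simp at hk; omega] at h
  rw [hext]
  rw [sum_choose_odd] at key
  -- The exponent `2 * n - 3` truncates at `n = 1`, where both sides are zero.
  obtain _ | _ | q := n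
  · omega
  · simp [Finset.sum_range_succ]
  · have he := sum_choose_even (q + 1)
    rw [show 2 * (q + 1) + 2 = 2 * (q + 1 + 1) by ring] at he
    rw [he] at key
    rw [show 2 * (q + 1 + 1) - 3 = 2 * q + 1 by omega, show q + 1 + 1 - 1 = q + 1 by omega]
    have e1 : 2 ^ (2 * (q + 1 + 1) + 1) = 16 * 2 ^ (2 * q + 1) := by ring
    have e2 : 2 ^ (2 * (q + 1) + 1) = 4 * 2 ^ (2 * q + 1) := by ring
    rw [e1, e2] at key
    generalize 2 ^ (2 * q + 1) = t at *
    nlinarith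

/-- For all positive integers `n`, `N_n(1) = (n-1)·2^{2n-3}`; equivalently
`∑_{k=1}^{n-1} k(n-k) C(2n+2, 2k+1) = (4n+2)(n-1)2^{2n-3}`. -/
theorem minusculeN_eval_one (n : ℕ) (hn : 0 < n) :
    (minusculeN n).eval 1 = ((n : ℝ) - 1) * 2 ^ (2 * n - 3) ∧
    ∑ k ∈ Finset.Icc 1 (n - 1), k * (n - k) * Nat.choose (2 * n + 2) (2 * k + 1) =
      (4 * n + 2) * (n - 1) * 2 ^ (2 * n - 3) := by
  have hs := minuscule_sum n hn
  refine ⟨?_, hs⟩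
  have hne : (4 * (n : ℝ) + 2) ≠ 0 := by positivity
  simp only [minusculeN, Polynomial.eval_finsetSum, Polynomial.eval_mul, Polynomial.eval_C,
    Polynomial.eval_pow, Polynomial.eval_X, one_pow, mul_one]
  rw [← Finset.sum_div, ← Nat.cast_sum, hs, div_eq_iff hne]
  push_cast [Nat.cast_sub (show 1 ≤ n from hn)]
  ring
end

section
/- For every n ≥ 1, writing N_{n+1}(x)² − N_{n+2}(x)·N_n(x) = (1/32) ∑_{k=1}^{2n} D_{n,k} x^k, one has D_{n,k} = C(4n+4, 2k) − (−1)^k C(2n, k) − (−1)^k C(2n, k−2) + (−1)^k (8n² + 16n + 6) C(2n, k−1) for 1 ≤ k ≤ 2n (with the convention C(m, j) = 0 for j < 0 or j > m). -/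
open Polynomial

/-- The polynomial `∑ C(m, 2k) x^k`, the even part of `(1 + X)^m` in the variable `x = X²`.
Summands with `2k > m` vanish. -/
noncomputable def evenBinom (m : ℕ) : ℝ[X] :=
  ∑ k ∈ Finset.range (m + 1), monomial k (Nat.choose m (2 * k) : ℝ)

/-- The polynomial `∑ C(m, 2k+1) x^k`, the odd part of `(1 + X)^m` divided by `X`, in the
variable `x = X²`. Summands with `2k+1 > m` vanish. -/
noncomputable def oddBinom (m : ℕ) : ℝ[X] :=
  ∑ k ∈ Finset.range (m + 1), monomial k (Nat.choose m (2 * k + 1) : ℝ)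

lemma coeff_evenBinom (m k : ℕ) : (evenBinom m).coeff k = (Nat.choose m (2 * k) : ℝ) := by
  simp only [evenBinom, finsetSum_coeff, coeff_monomial, Finset.sum_ite_eq', Finset.mem_range]
  split_ifs with h
  · rfl
  · rw [Nat.choose_eq_zero_of_lt (by omega), Nat.cast_zero]

lemma coeff_oddBinom (m k : ℕ) : (oddBinom m).coeff k = (Nat.choose m (2 * k + 1) : ℝ) := by
  simp only [oddBinom, finsetSum_coeff, coeff_monomial, Finset.sum_ite_eq', Finset.mem_range]
  split_ifs with h
  · rfl
  · rw [Nat.choose_eq_zero_of_lt (by omega), Nat.cast_zero]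

lemma coeff_one_sub_X_pow_real (m j : ℕ) :
    ((1 - X : ℝ[X]) ^ m).coeff j = (-1) ^ j * (Nat.choose m j : ℝ) := by
  have h : (1 - X : ℝ[X]) ^ m = ((1 + X : ℝ[X]) ^ m).comp (C (-1) * X) := by
    simp [sub_eq_add_neg]
  rw [h, comp_C_mul_X_coeff, coeff_one_add_X_pow, mul_comm]

lemma two_mul_expand_evenBinom (m : ℕ) :
    2 * expand ℝ 2 (evenBinom m) = (1 + X) ^ m + (1 - X) ^ m := by
  ext j
  rw [coeff_ofNat_mul, coeff_add, coeff_one_add_X_pow, coeff_one_sub_X_pow_real]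
  rcases Nat.even_or_odd' j with ⟨i, rfl | rfl⟩
  · rw [coeff_expand_mul' two_pos, coeff_evenBinom]
    simp [pow_mul]
    ring
  · rw [coeff_expand two_pos, if_neg (by omega)]
    simp [pow_add, pow_mul]

lemma two_mul_X_mul_expand_oddBinom (m : ℕ) :
    2 * (X * expand ℝ 2 (oddBinom m)) = (1 + X) ^ m - (1 - X) ^ m := by
  ext j
  rw [coeff_ofNat_mul, coeff_sub, coeff_one_add_X_pow, coeff_one_sub_X_pow_real]
  rcases Nat.even_or_odd' j with ⟨i, rfl | rfl⟩
  · have h : (X * expand ℝ 2 (oddBinom m)).coeff (2 * i) = 0 := by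
      rcases i with _ | i
      · simp
      · rw [show 2 * (i + 1) = 2 * i + 1 + 1 by ring, coeff_X_mul, coeff_expand two_pos,
          if_neg (by omega)]
    rw [h]
    simp [pow_mul]
  · rw [coeff_X_mul, coeff_expand_mul' two_pos, coeff_oddBinom]
    simp [pow_add, pow_mul]
    ring

/-- Absorption applied on both sides: `j (m - j) C(m, j) = m (m - 1) C(m - 2, j - 1)` with
`m = 2n + 2` and `j = 2k + 1`. -/
lemma choose_absorb_both (n k : ℕ) (hk : k ≤ n) :
    (2 * k + 1 : ℝ) * (2 * n + 1 - 2 * k) * (Nat.choose (2 * n + 2) (2 * k + 1) : ℝ) =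
      (2 * n + 2) * (2 * n + 1) * (Nat.choose (2 * n) (2 * k) : ℝ) := by
  have h1 := Nat.add_one_mul_choose_eq (2 * n + 1) (2 * k)
  have h2 := Nat.choose_mul_succ_eq (2 * n) (2 * k)
  have h3 : ((2 * n + 1 - 2 * k : ℕ) : ℝ) = 2 * n + 1 - 2 * k := by
    rw [Nat.cast_sub (by omega)]; push_cast; ring
  have h1' := congrArg (Nat.cast : ℕ → ℝ) h1
  have h2' := congrArg (Nat.cast : ℕ → ℝ) h2
  rw [Nat.cast_mul, Nat.cast_mul, h3] at h2'
  push_cast at h1' h2'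
  linear_combination (-(2 * n + 1 - 2 * k : ℝ)) * h1' - (2 * n + 2 : ℝ) * h2'

lemma coeff_minusculeN (n k : ℕ) :
    8 * (minusculeN n).coeff k =
      (2 * n + 2) * (Nat.choose (2 * n) (2 * k) : ℝ) -
        (Nat.choose (2 * n + 2) (2 * k + 1) : ℝ) := by
  simp only [minusculeN, finsetSum_coeff, coeff_C_mul_X_pow, Finset.sum_ite_eq, Finset.mem_Icc]
  rcases lt_or_ge n k with h | h
  · rw [if_neg (by omega), Nat.choose_eq_zero_of_lt (by omega),
      Nat.choose_eq_zero_of_lt (by omega)]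
    simp
  · have key := choose_absorb_both n k h
    have hn : (4 * n + 2 : ℝ) ≠ 0 := by positivity
    -- The defining formula also holds at `k = 0` and `k = n`, where it gives `0`.
    have hval : (if 1 ≤ k ∧ k ≤ n - 1 then
        ((k * (n - k) * Nat.choose (2 * n + 2) (2 * k + 1) : ℕ) : ℝ) / (4 * (n : ℝ) + 2) else 0)
        = (k * (n - k) * (Nat.choose (2 * n + 2) (2 * k + 1) : ℝ)) / (4 * (n : ℝ) + 2) := by
      split_ifs with h'
      · push_cast [Nat.cast_sub h]; rfl
      · have : k = 0 ∨ k = n := by omega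
        rcases this with rfl | rfl <;> simp
    rw [hval, ← mul_div_assoc, div_eq_iff hn]
    linear_combination 2 * key

lemma eight_mul_minusculeN (n : ℕ) :
    8 * minusculeN n = (2 * n + 2) * evenBinom (2 * n) - oddBinom (2 * n + 2) := by
  ext k
  have h : (2 * n + 2 : ℝ[X]) = C (2 * n + 2 : ℝ) := by
    simp only [map_add, map_mul, map_natCast, map_ofNat]
  rw [h, coeff_ofNat_mul, coeff_sub, coeff_C_mul, coeff_evenBinom, coeff_oddBinom,
    ← coeff_minusculeN]

lemma sixteen_X_mul_expand_minusculeN (n : ℕ) :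
    16 * (X * expand ℝ 2 (minusculeN n)) =
      (1 + X) ^ (2 * n) * (2 * (n : ℝ[X]) * X - 1 - X ^ 2) +
        (1 - X) ^ (2 * n) * (2 * (n : ℝ[X]) * X + 1 + X ^ 2) := by
  have h := congrArg (expand ℝ 2) (eight_mul_minusculeN n)
  simp only [map_mul, map_sub, map_add, map_natCast, map_ofNat] at h
  have h1 := two_mul_expand_evenBinom (2 * n)
  have h2 := two_mul_X_mul_expand_oddBinom (2 * n + 2)
  linear_combination (2 * X) * h + ((2 * n + 2) * X) * h1 - h2

lemma thirtytwo_mul_minusculeN_D (n : ℕ) :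
    32 * ((minusculeN (n + 1)) ^ 2 - minusculeN (n + 2) * minusculeN n) =
      evenBinom (4 * n + 4) -
        (1 - X) ^ (2 * n) * (1 + (8 * (n : ℝ[X]) ^ 2 + 16 * (n : ℝ[X]) + 6) * X + X ^ 2) := by
  apply expand_injective (R := ℝ) two_pos
  have h0 := sixteen_X_mul_expand_minusculeN n
  have h1 := sixteen_X_mul_expand_minusculeN (n + 1)
  have h2 := sixteen_X_mul_expand_minusculeN (n + 2)
  have hE := two_mul_expand_evenBinom (4 * n + 4)
  simp only [map_mul, map_sub, map_add, map_natCast, map_ofNat, map_pow, expand_X, map_one]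
  have hX : (8 * X ^ 2 : ℝ[X]) ≠ 0 := mul_ne_zero (by norm_num) (pow_ne_zero _ X_ne_zero)
  apply mul_left_cancel₀ hX
  have hc : (1 - X ^ 2 : ℝ[X]) ^ (2 * n) = (1 + X) ^ (2 * n) * (1 - X) ^ (2 * n) := by
    rw [← mul_pow]; ring
  have ha : ∀ y : ℝ[X], y ^ (2 * (n + 1)) = y ^ (2 * n) * y ^ 2 := fun y => by ring
  have hb : ∀ y : ℝ[X], y ^ (2 * (n + 2)) = y ^ (2 * n) * y ^ 4 := fun y => by ring
  have hd : ∀ y : ℝ[X], y ^ (4 * n + 4) = (y ^ (2 * n)) ^ 2 * y ^ 4 := fun y => by ring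
  rw [ha, ha] at h1
  rw [hb, hb] at h2
  rw [hd, hd] at hE
  rw [hc]
  push_cast at h1 h2
  -- What remains is a polynomial identity in `n`, `X` and the powers `A`, `B`.
  generalize (1 + X : ℝ[X]) ^ (2 * n) = A at *
  generalize (1 - X : ℝ[X]) ^ (2 * n) = B at *
  generalize expand ℝ 2 (minusculeN n) = N0 at *
  generalize expand ℝ 2 (minusculeN (n + 1)) = N1 at *
  generalize expand ℝ 2 (minusculeN (n + 2)) = N2 at *
  generalize expand ℝ 2 (evenBinom (4 * n + 4)) = E at *
  have e1 := congrArg (· ^ 2) h1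
  have e2 := congrArg₂ (· * ·) h2 h0
  linear_combination e1 - e2 - 4 * X ^ 2 * hE

/-- For `n ≥ 1`, writing `N_{n+1}(x)² − N_{n+2}(x) N_n(x) = (1/32) ∑_{k=1}^{2n} D_{n,k} x^k`,
one has `D_{n,k} = C(4n+4, 2k) − (−1)^k C(2n, k) − (−1)^k C(2n, k−2)
+ (−1)^k (8n²+16n+6) C(2n, k−1)` for `1 ≤ k ≤ 2n`
(with `C(2n, k−2) = 0` when `k < 2`). -/
theorem minusculeN_D_coeff (n : ℕ) (hn : 1 ≤ n) (k : ℕ) (hk1 : 1 ≤ k) (hk2 : k ≤ 2 * n) :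
    ((minusculeN (n + 1)) ^ 2 - minusculeN (n + 2) * minusculeN n).coeff k =
      1 / 32 * ((Nat.choose (4 * n + 4) (2 * k) : ℝ) -
        (-1) ^ k * (Nat.choose (2 * n) k : ℝ) -
        (-1) ^ k * (if 2 ≤ k then (Nat.choose (2 * n) (k - 2) : ℝ) else 0) +
        (-1) ^ k * (8 * (n : ℝ) ^ 2 + 16 * n + 6) * (Nat.choose (2 * n) (k - 1) : ℝ)) := by
  have h := congrArg (fun p => p.coeff k) (thirtytwo_mul_minusculeN_D n)
  have hsplit : (1 - X : ℝ[X]) ^ (2 * n) * (1 + (8 * (n : ℝ[X]) ^ 2 + 16 * (n : ℝ[X]) + 6) * X + X ^ 2) =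
      (1 - X) ^ (2 * n) + C (8 * (n : ℝ) ^ 2 + 16 * n + 6) * ((1 - X) ^ (2 * n) * X) +
        (1 - X) ^ (2 * n) * X ^ 2 := by
    simp only [map_add, map_mul, map_pow, map_natCast, map_ofNat]
    ring
  -- For `k = j + 1` the factor `X` shifts to `k - 1 = j`; the factor `X ^ 2` needs `2 ≤ k`.
  obtain ⟨j, rfl⟩ : ∃ j, k = j + 1 := ⟨k - 1, by omega⟩
  rw [hsplit] at h
  simp only [coeff_ofNat_mul] at h
  rw [coeff_sub (evenBinom _), coeff_add, coeff_add, coeff_C_mul, coeff_mul_X, coeff_mul_X_pow',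
    coeff_evenBinom, coeff_one_sub_X_pow_real, coeff_one_sub_X_pow_real,
    coeff_one_sub_X_pow_real] at h
  rw [Nat.add_sub_cancel]
  rcases j with _ | i
  · norm_num at h ⊢
    linarith
  · rw [if_pos (by omega), show i + 1 + 1 - 2 = i by omega] at h
    rw [if_pos (by omega), show i + 1 + 1 - 2 = i by omega]
    simp only [pow_succ] at h ⊢
    norm_num at h ⊢
    linarith
end
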